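/- Let N ≥ 3 and α ∈ (0, N), and let F satisfy |F(s)| ≤ C(|s|^(1+α/N) + |s|^((N+α)/(N-2))). Then for u ∈ H¹(ℝ^N), with ‖u‖²_{H¹} = ∫(|∇u|²+|u|²), the Riesz-potential energy satisfies ∫_{ℝ^N}(I_α*F(u))F(u) ≤ C'( (∫|u|²)^(1+α/N) + (∫|∇u|²)^((N+α)/(N-2)) ). Consequently there exists δ > 0 such that ‖u‖²_{H¹} ≤ δ implies ∫(I_α*F(u))F(u) ≤ ¼‖u‖²_{H¹}, and hence I(u) ≥ ¼‖u‖²_{H¹}. -/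

import Mathlib

open MeasureTheory
namespace ChoquardAux
open scoped ENNReal NNReal
open Set Function Filter Topology

/-- One-dimensional bound, no continuity of the derivative needed. -/
lemma enorm_le_lintegral_deriv {f : ℝ → ℝ} (hf : Differentiable ℝ f) (hfc : HasCompactSupport f)
    (x : ℝ) : ‖f x‖ₑ ≤ ∫⁻ y, ‖deriv f y‖ₑ := by
  by_cases hfin : ∫⁻ y, ‖deriv f y‖ₑ = ∞
  · rw [hfin]; exact le_top
  have hint : Integrable (deriv f) := by
    refine ⟨(measurable_deriv f).aestronglyMeasurable, ?_⟩
    exact lt_top_iff_ne_top.2 hfin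
  obtain ⟨R, hR⟩ := hfc.isCompact.isBounded.subset_closedBall (0 : ℝ)
  obtain ⟨a, ha, hax⟩ : ∃ a, f a = 0 ∧ a ≤ x := by
    refine ⟨min x (-|R| - 1), ?_, min_le_left _ _⟩
    by_contra hne
    have := hR (subset_tsupport f hne)
    rw [mem_closedBall_zero_iff, Real.norm_eq_abs] at this
    have h1 := neg_le_of_abs_le this
    have h2 : min x (-|R| - 1) ≤ -|R| - 1 := min_le_right _ _
    have h3 := le_abs_self R
    linarith
  have hftc := intervalIntegral.integral_eq_sub_of_hasDerivAt
    (fun y _ => (hf y).hasDerivAt) (hint.intervalIntegrable (a := a) (b := x))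
  rw [ha, sub_zero] at hftc
  rw [← hftc, intervalIntegral.integral_of_le hax]
  exact (enorm_integral_le_lintegral_enorm _).trans (setLIntegral_le_lintegral _ _)

lemma gns_pi {ι : Type*} [Fintype ι]
    {p : ℝ} (hp : Real.HolderConjugate (Fintype.card ι) p)
    {u : (ι → ℝ) → ℝ} (hu : Differentiable ℝ u) (h2u : HasCompactSupport u) :
    ∫⁻ x, ‖u x‖ₑ ^ p ≤ (∫⁻ x, ‖fderiv ℝ u x‖ₑ) ^ p := by
  classical
  have : (1 : ℝ) ≤ ↑(Fintype.card ι) - 1 := by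
    have hι : (2 : ℝ) ≤ Fintype.card ι := by exact_mod_cast hp.lt
    linarith
  calc ∫⁻ x, ‖u x‖ₑ ^ p
      = ∫⁻ x, (‖u x‖ₑ ^ (1 / (Fintype.card ι - 1 : ℝ))) ^ (Fintype.card ι : ℝ) := by
        congr! 2 with x
        rw [← ENNReal.rpow_mul, hp.conjugate_eq]
        field_simp
    _ = ∫⁻ x, ∏ _i : ι, ‖u x‖ₑ ^ (1 / (Fintype.card ι - 1 : ℝ)) := by
        congr! 2 with x
        simp_rw [Finset.prod_const]
        norm_cast
    _ ≤ ∫⁻ x, ∏ i, (∫⁻ xᵢ, ‖fderiv ℝ u (update x i xᵢ)‖ₑ) ^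
          ((1 : ℝ) / (Fintype.card ι - 1 : ℝ)) := ?_
    _ ≤ (∫⁻ x, ‖fderiv ℝ u x‖ₑ) ^ p := by
        apply lintegral_prod_lintegral_pow_le _ hp
        fun_prop
  gcongr with x i
  calc ‖u x‖ₑ
    _ ≤ ∫⁻ xᵢ, ‖deriv (u ∘ update x i) xᵢ‖ₑ := by
        apply le_trans (by simp) (enorm_le_lintegral_deriv (f := u ∘ update x i) _ _ (x i))
        · exact hu.comp ((contDiff_update 1 x i).differentiable one_ne_zero)
        · exact h2u.comp_isClosedEmbedding (isClosedEmbedding_update x i)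
    _ ≤ ∫⁻ xᵢ, ‖fderiv ℝ u (update x i xᵢ)‖ₑ := ?_
  gcongr with y
  calc ‖deriv (u ∘ update x i) y‖ₑ = ‖fderiv ℝ u (update x i y) (deriv (update x i) y)‖ₑ := by
        rw [fderiv_comp_deriv _ hu.differentiableAt
          (hasDerivAt_update x i y).differentiableAt]
    _ ≤ ‖fderiv ℝ u (update x i y)‖ₑ * ‖deriv (update x i) y‖ₑ := ContinuousLinearMap.le_opENorm _ _
    _ ≤ ‖fderiv ℝ u (update x i y)‖ₑ := by simp [deriv_update, Pi.enorm_single]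

lemma gns_one {E : Type*} [NormedAddCommGroup E] [NormedSpace ℝ E] [MeasurableSpace E]
    [BorelSpace E] [FiniteDimensional ℝ E] (μ : Measure E) [μ.IsAddHaarMeasure]
    {p : ℝ} (hp : Real.HolderConjugate (Module.finrank ℝ E) p) :
    ∃ C : ℝ≥0, ∀ u : E → ℝ, Differentiable ℝ u → HasCompactSupport u →
    ∫⁻ x, ‖u x‖ₑ ^ p ∂μ ≤ C * (∫⁻ x, ‖fderiv ℝ u x‖ₑ ∂μ) ^ p := by
  let ι := Fin (Module.finrank ℝ E)
  have hιcard : Fintype.card ι = Module.finrank ℝ E := Fintype.card_fin (Module.finrank ℝ E)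
  have : Module.finrank ℝ E = Module.finrank ℝ (ι → ℝ) := by simp [hιcard]
  let e : E ≃L[ℝ] ι → ℝ := ContinuousLinearEquiv.ofFinrankEq this
  have hp : Real.HolderConjugate (Fintype.card ι) p := by rwa [hιcard]
  have h0p : 0 ≤ p := hp.symm.nonneg
  let c := Measure.addHaarScalarFactor μ ((volume : Measure (ι → ℝ)).map e.symm)
  have hc : 0 < c := Measure.addHaarScalarFactor_pos_of_isAddHaarMeasure ..
  have h2c : μ = c • ((volume : Measure (ι → ℝ)).map e.symm) :=
    Measure.isAddLeftInvariant_eq_smul ..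
  have h3c : (c : ℝ≥0∞) ≠ 0 := by simp_rw [ne_eq, ENNReal.coe_eq_zero, hc.ne', not_false_eq_true]
  obtain ⟨C, h0C⟩ : ∃ C : ℝ≥0, C = (c * ‖(e.symm : (ι → ℝ) →L[ℝ] E)‖₊ ^ p) * (c ^ p)⁻¹ := ⟨_, rfl⟩
  have hC : C * c ^ p = c * ‖(e.symm : (ι → ℝ) →L[ℝ] E)‖₊ ^ p := by
    rw [h0C, inv_mul_cancel_right₀ (NNReal.rpow_pos hc).ne']
  refine ⟨C, fun u hu h2u => ?_⟩
  simp only [h2c, ENNReal.smul_def, lintegral_smul_measure, smul_eq_mul]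
  let v : (ι → ℝ) → ℝ := u ∘ e.symm
  have hv : Differentiable ℝ v := hu.comp e.symm.differentiable
  have h2v : HasCompactSupport v := h2u.comp_homeomorph e.symm.toHomeomorph
  have :=
  calc ∫⁻ x, ‖u x‖ₑ ^ p ∂(volume : Measure (ι → ℝ)).map e.symm
      = ∫⁻ y, ‖v y‖ₑ ^ p := by
        refine lintegral_map ?_ e.symm.continuous.measurable
        exact hu.continuous.measurable.nnnorm.coe_nnreal_ennreal.pow_const _
    _ ≤ (∫⁻ y, ‖fderiv ℝ v y‖ₑ) ^ p := gns_pi hp hv h2v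
    _ = (∫⁻ y, ‖(fderiv ℝ u (e.symm y)).comp (fderiv ℝ e.symm y)‖ₑ) ^ p := by
        congr! with y
        apply fderiv_comp _ (hu _)
        exact e.symm.differentiableAt
    _ ≤ (∫⁻ y, ‖fderiv ℝ u (e.symm y)‖ₑ * ‖(e.symm : (ι → ℝ) →L[ℝ] E)‖ₑ) ^ p := by
        gcongr with y
        rw [e.symm.fderiv]
        apply ContinuousLinearMap.opENorm_comp_le
    _ = (‖(e.symm : (ι → ℝ) →L[ℝ] E)‖ₑ * ∫⁻ y, ‖fderiv ℝ u (e.symm y)‖ₑ) ^ p := by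
        rw [lintegral_mul_const, mul_comm]
        fun_prop
    _ = (‖(e.symm : (ι → ℝ) →L[ℝ] E)‖₊ ^ p : ℝ≥0) * (∫⁻ y, ‖fderiv ℝ u (e.symm y)‖ₑ) ^ p := by
        rw [ENNReal.mul_rpow_of_nonneg _ _ h0p, enorm_eq_nnnorm, ← ENNReal.coe_rpow_of_nonneg _ h0p]
    _ = (‖(e.symm : (ι → ℝ) →L[ℝ] E)‖₊ ^ p : ℝ≥0)
        * (∫⁻ x, ‖fderiv ℝ u x‖ₑ ∂(volume : Measure (ι → ℝ)).map e.symm) ^ p := by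
        congr
        rw [lintegral_map _ e.symm.continuous.measurable]
        fun_prop
  rw [← ENNReal.mul_le_mul_iff_right h3c ENNReal.coe_ne_top, ← mul_assoc, ← ENNReal.coe_mul, ← hC,
    ENNReal.coe_mul] at this
  rw [ENNReal.mul_rpow_of_nonneg _ _ h0p, ← mul_assoc, ← ENNReal.coe_rpow_of_ne_zero hc.ne']
  exact this

/-- Sobolev for differentiable compactly supported functions. -/
lemma sobolev_compact (N : ℕ) (hN : 3 ≤ N) :
    ∃ K : ℝ≥0, ∀ u : EuclideanSpace ℝ (Fin N) → ℝ, Differentiable ℝ u → HasCompactSupport u →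
    ∫⁻ x, ‖u x‖ₑ ^ (2 * (N : ℝ) / (N - 2)) ≤
      K * (∫⁻ x, ‖fderiv ℝ u x‖ₑ ^ (2 : ℝ)) ^ ((N : ℝ) / (N - 2)) := by
  have hN3 : (3 : ℝ) ≤ N := by exact_mod_cast hN
  have hN1 : (0 : ℝ) < N - 1 := by linarith
  have hN2 : (0 : ℝ) < N - 2 := by linarith
  have hNpos : (0 : ℝ) < N := by linarith
  have hconj : Real.HolderConjugate (Module.finrank ℝ (EuclideanSpace ℝ (Fin N)))
      ((N : ℝ) / (N - 1)) := by
    rw [finrank_euclideanSpace_fin]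
    exact Real.HolderConjugate.conjExponent (by linarith)
  obtain ⟨C, hC⟩ := gns_one (volume : Measure (EuclideanSpace ℝ (Fin N))) hconj
  set n' : ℝ := (N : ℝ) / (N - 1) with hn'
  have hn'0 : 0 < n' := by positivity
  let γ : ℝ≥0 := .mk (2 * (N - 1) / (N - 2)) (by positivity)
  have h0γ : (γ : ℝ) = 2 * (N - 1) / (N - 2) := rfl
  have h1γ : 1 < (γ : ℝ) := by rw [h0γ, one_lt_div hN2]; linarith
  set p' : ℝ := 2 * (N : ℝ) / (N - 2) with hp'
  have hp'0 : 0 < p' := by positivity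
  have h2γ : (γ : ℝ) * n' = p' := by rw [h0γ, hn', hp']; field_simp
  have h3γ : ((γ : ℝ) - 1) * 2 = p' := by rw [h0γ, hp']; field_simp; ring
  set r : ℝ := 2 * (N - 1) / (N - 2) with hr
  have hr0 : 0 < r := by positivity
  refine ⟨(C * γ ^ n') ^ r, fun u hu h2u => ?_⟩
  set A := ∫⁻ x, ‖u x‖ₑ ^ p' with hA
  set B := ∫⁻ x, ‖fderiv ℝ u x‖ₑ ^ (2 : ℝ) with hB
  have hAtop : A ≠ ∞ := by
    refine lintegral_rpow_enorm_lt_top_of_eLpNorm'_lt_top hp'0 ?_ |>.ne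
    have := hu.continuous.memLp_of_hasCompactSupport (μ := volume) (p := ENNReal.ofReal p') h2u
      |>.eLpNorm_lt_top
    rwa [eLpNorm_eq_eLpNorm' (by simpa using hp'0) (by simp), ENNReal.toReal_ofReal hp'0.le] at this
  by_cases hA0 : A = 0
  · rw [hA0]; exact zero_le
  have hcont := hu.continuous
  let v : EuclideanSpace ℝ (Fin N) → ℝ := fun x ↦ ‖u x‖ ^ (γ : ℝ)
  have hv : Differentiable ℝ v := hu.norm_rpow h1γ
  have h2v : HasCompactSupport v := h2u.norm.rpow_const (by positivity)
  have key :=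
  calc A = ∫⁻ x, ‖v x‖ₑ ^ n' := by
        rw [hA, ← h2γ]
        simp (discharger := positivity) [v, Real.enorm_rpow_of_nonneg, ENNReal.rpow_mul]
    _ ≤ C * (∫⁻ x, ‖fderiv ℝ v x‖ₑ) ^ n' := hC v hv h2v
    _ ≤ C * (γ * ∫⁻ x, ‖u x‖ₑ ^ ((γ : ℝ) - 1) * ‖fderiv ℝ u x‖ₑ) ^ n' := by
      gcongr
      rw [← lintegral_const_mul γ (by fun_prop)]
      gcongr with x
      rw [← mul_assoc]
      exact enorm_fderiv_norm_rpow_le hu h1γ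
    _ ≤ C * (γ * (A ^ (1 / (2 : ℝ)) * B ^ (1 / (2 : ℝ)))) ^ n' := by
      gcongr
      have := ENNReal.lintegral_mul_le_Lp_mul_Lq (volume : Measure (EuclideanSpace ℝ (Fin N)))
        Real.HolderConjugate.two_two (f := fun x => ‖u x‖ₑ ^ ((γ : ℝ) - 1))
        (g := fun x => ‖fderiv ℝ u x‖ₑ) (by fun_prop) (by fun_prop)
      simpa only [← ENNReal.rpow_mul, h3γ, Pi.mul_apply] using this
    _ = (C * γ ^ n' * B ^ (n' / 2)) * A ^ (n' / 2) := by
      rw [ENNReal.mul_rpow_of_nonneg _ _ hn'0.le, ENNReal.mul_rpow_of_nonneg _ _ hn'0.le,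
        ← ENNReal.rpow_mul, ← ENNReal.rpow_mul]
      rw [show 1 / (2 : ℝ) * n' = n' / 2 by ring]
      ring
  have h5 : A ^ (n' / 2) ≠ 0 := (ENNReal.rpow_pos (pos_iff_ne_zero.mpr hA0) hAtop).ne'
  have h6 : A ^ (n' / 2) ≠ ∞ := ENNReal.rpow_ne_top_of_nonneg (by positivity) hAtop
  have h7 : A ^ (1 - n' / 2) ≤ C * γ ^ n' * B ^ (n' / 2) := by
    rw [ENNReal.rpow_sub _ _ hA0 hAtop, ENNReal.rpow_one]
    exact ENNReal.div_le_of_le_mul key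
  have e1 : (1 - n' / 2) * r = 1 := by rw [hn', hr]; field_simp; ring
  have e2 : n' / 2 * r = N / (N - 2) := by rw [hn', hr]; field_simp
  calc A = (A ^ (1 - n' / 2)) ^ r := by rw [← ENNReal.rpow_mul, e1, ENNReal.rpow_one]
    _ ≤ (C * γ ^ n' * B ^ (n' / 2)) ^ r := by gcongr
    _ = _ := by
      rw [ENNReal.mul_rpow_of_nonneg _ _ hr0.le, ← ENNReal.rpow_mul, e2,
        ← ENNReal.coe_rpow_of_nonneg _ hn'0.le, ← ENNReal.coe_mul,
        ← ENNReal.coe_rpow_of_nonneg _ hr0.le]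

lemma exists_cutoff (N : ℕ) : ∃ M : ℝ, 0 ≤ M ∧ ∃ χ : ℕ → EuclideanSpace ℝ (Fin N) → ℝ,
    (∀ n, Differentiable ℝ (χ n)) ∧ (∀ n, HasCompactSupport (χ n)) ∧
    (∀ n x, |χ n x| ≤ 1) ∧ (∀ n x, ‖fderiv ℝ (χ n) x‖ ≤ M / (n + 1)) ∧
    (∀ x, ∀ᶠ n in atTop, χ n x = 1) := by
  let φ : ContDiffBump (0 : EuclideanSpace ℝ (Fin N)) := ⟨1, 2, by norm_num, by norm_num⟩
  have hφd : Differentiable ℝ φ := (φ.contDiff (n := 1)).differentiable one_ne_zero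
  have hφc : Continuous (fderiv ℝ φ) := (φ.contDiff (n := 1)).continuous_fderiv one_ne_zero
  obtain ⟨M, hM⟩ := (φ.hasCompactSupport.fderiv (𝕜 := ℝ)).exists_bound_of_continuous hφc
  have hM0 : 0 ≤ M := (norm_nonneg _).trans (hM 0)
  have hd : ∀ n : ℕ, ∀ x : EuclideanSpace ℝ (Fin N),
      HasFDerivAt (fun x => φ (((n : ℝ) + 1)⁻¹ • x))
        ((fderiv ℝ φ (((n : ℝ) + 1)⁻¹ • x)).comp
          (((n : ℝ) + 1)⁻¹ • ContinuousLinearMap.id ℝ (EuclideanSpace ℝ (Fin N)))) x := by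
    intro n x
    have h1 : HasFDerivAt (fun x : EuclideanSpace ℝ (Fin N) => ((n : ℝ) + 1)⁻¹ • x)
        (((n : ℝ) + 1)⁻¹ • ContinuousLinearMap.id ℝ (EuclideanSpace ℝ (Fin N))) x :=
      (hasFDerivAt_id (𝕜 := ℝ) x).const_smul (((n : ℝ) + 1)⁻¹)
    exact HasFDerivAt.comp (g := (φ : EuclideanSpace ℝ (Fin N) → ℝ)) x (hφd (((n : ℝ) + 1)⁻¹ • x)).hasFDerivAt h1
  refine ⟨M, hM0, fun n x => φ (((n : ℝ) + 1)⁻¹ • x), fun n x => (hd n x).differentiableAt,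
    ?_, ?_, ?_, ?_⟩
  · intro n
    exact φ.hasCompactSupport.comp_smul (by positivity)
  · intro n x
    rw [abs_of_nonneg φ.nonneg]
    exact φ.le_one
  · intro n x
    rw [(hd n x).fderiv, ContinuousLinearMap.comp_smul, ContinuousLinearMap.comp_id, norm_smul,
      Real.norm_of_nonneg (by positivity), div_eq_inv_mul]
    gcongr
    exact hM _
  · intro x
    obtain ⟨n₀, hn₀⟩ := exists_nat_ge ‖x‖
    filter_upwards [eventually_ge_atTop n₀] with n hn
    apply φ.one_of_mem_closedBall
    rw [mem_closedBall_zero_iff, norm_smul, Real.norm_of_nonneg (by positivity)]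
    change ((n : ℝ) + 1)⁻¹ * ‖x‖ ≤ 1
    rw [inv_mul_le_iff₀ (by positivity)]
    have : (n₀ : ℝ) ≤ n := by exact_mod_cast hn
    linarith

/-- Sobolev inequality for differentiable functions in `H¹`. -/
lemma sobolev (N : ℕ) (hN : 3 ≤ N) :
    ∃ K : ℝ≥0, ∀ u : EuclideanSpace ℝ (Fin N) → ℝ, Differentiable ℝ u →
    ∫⁻ x, ‖u x‖ₑ ^ (2 : ℝ) ≠ ∞ →
    ∫⁻ x, ‖u x‖ₑ ^ (2 * (N : ℝ) / (N - 2)) ≤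
      K * (∫⁻ x, ‖fderiv ℝ u x‖ₑ ^ (2 : ℝ)) ^ ((N : ℝ) / (N - 2)) := by
  have hN3 : (3 : ℝ) ≤ N := by exact_mod_cast hN
  have hN2 : (0 : ℝ) < N - 2 := by linarith
  have hq : 0 < (N : ℝ) / (N - 2) := by positivity
  obtain ⟨K, hK⟩ := sobolev_compact N hN
  obtain ⟨M, hM0, χ, hχd, hχc, hχ1, hχM, hχlim⟩ := exists_cutoff N
  refine ⟨K * 2 ^ ((N : ℝ) / (N - 2)), fun u hu hu2 => ?_⟩
  set q : ℝ := (N : ℝ) / (N - 2) with hqdef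
  set p' : ℝ := 2 * (N : ℝ) / (N - 2) with hp'
  have hp'0 : 0 < p' := by positivity
  set A := ∫⁻ x, ‖u x‖ₑ ^ (2 : ℝ) with hA
  set B := ∫⁻ x, ‖fderiv ℝ u x‖ₑ ^ (2 : ℝ) with hB
  have hcont := hu.continuous
  have hbound : ∀ n : ℕ, ∫⁻ x, ‖χ n x * u x‖ₑ ^ p' ≤
      K * (2 * B + 2 * ENNReal.ofReal (M / (n + 1)) ^ (2 : ℝ) * A) ^ q := by
    intro n
    refine (hK (fun x => χ n x * u x) ((hχd n).mul hu) (hχc n).mul_right).trans ?_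
    gcongr
    rw [hA, hB, ← lintegral_const_mul _ (by fun_prop), ← lintegral_const_mul _ (by fun_prop),
      ← lintegral_add_left (by fun_prop)]
    gcongr with x
    have h1 : ‖fderiv ℝ (fun x => χ n x * u x) x‖ₑ ≤
        ‖fderiv ℝ u x‖ₑ + ENNReal.ofReal (M / (n + 1)) * ‖u x‖ₑ := by
      rw [fderiv_fun_mul (hχd n x) (hu x)]
      refine (enorm_add_le (χ n x • fderiv ℝ u x) (u x • fderiv ℝ (χ n) x)).trans ?_
      rw [enorm_smul, enorm_smul, mul_comm ‖u x‖ₑ]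
      gcongr
      · refine (mul_le_of_le_one_left' ?_)
        rw [← ofReal_norm, Real.norm_eq_abs]
        exact ENNReal.ofReal_le_one.2 (hχ1 n x)
      · rw [← ofReal_norm]
        exact ENNReal.ofReal_le_ofReal (hχM n x)
    calc _ ≤ (‖fderiv ℝ u x‖ₑ + ENNReal.ofReal (M / (n + 1)) * ‖u x‖ₑ) ^ (2 : ℝ) := by gcongr
      _ ≤ (2 : ℝ≥0∞) ^ ((2 : ℝ) - 1) * (‖fderiv ℝ u x‖ₑ ^ (2 : ℝ)
          + (ENNReal.ofReal (M / (n + 1)) * ‖u x‖ₑ) ^ (2 : ℝ)) :=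
          ENNReal.rpow_add_le_mul_rpow_add_rpow _ _ (by norm_num)
      _ = _ := by
        rw [ENNReal.mul_rpow_of_nonneg _ _ (by norm_num)]
        norm_num
        ring
  have hlim : Tendsto (fun n : ℕ =>
      K * (2 * B + 2 * ENNReal.ofReal (M / (n + 1)) ^ (2 : ℝ) * A) ^ q) atTop
      (𝓝 (K * (2 * B) ^ q)) := by
    have h0 : Tendsto (fun n : ℕ => M / ((n : ℝ) + 1)) atTop (𝓝 0) := by
      have := (tendsto_one_div_add_atTop_nhds_zero_nat (𝕜 := ℝ)).const_mul M
      simpa [div_eq_mul_inv] using this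
    have h1 : Tendsto (fun n : ℕ => 2 * ENNReal.ofReal (M / ((n : ℝ) + 1)) ^ (2 : ℝ) * A) atTop
        (𝓝 0) := by
      have h2 := ENNReal.tendsto_ofReal h0
      have h3 := (ENNReal.continuous_rpow_const (y := 2)).tendsto _ |>.comp h2
      have h4 := ENNReal.Tendsto.const_mul (a := 2) h3 (Or.inr (by simp))
      have h5 := ENNReal.Tendsto.mul_const (b := A) h4 (Or.inr hu2)
      simpa [Function.comp_def] using h5
    have h6 := ((ENNReal.continuous_rpow_const (y := q)).tendsto _).comp
      (Tendsto.const_add (2 * B) h1)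
    have h7 := ENNReal.Tendsto.const_mul (a := K) h6 (Or.inr (by simp))
    simpa [Function.comp_def] using h7
  calc ∫⁻ x, ‖u x‖ₑ ^ p' = ∫⁻ x, liminf (fun n => ‖χ n x * u x‖ₑ ^ p') atTop := by
        congr with x
        refine (Tendsto.liminf_eq ?_).symm
        refine tendsto_const_nhds.congr' ?_
        filter_upwards [hχlim x] with n hn
        rw [hn, one_mul]
    _ ≤ liminf (fun n => ∫⁻ x, ‖χ n x * u x‖ₑ ^ p') atTop := by
        refine lintegral_liminf_le fun n => ?_
        have := (hχd n).continuous
        fun_prop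
    _ ≤ liminf (fun n : ℕ => K * (2 * B + 2 * ENNReal.ofReal (M / (n + 1)) ^ (2 : ℝ) * A) ^ q)
          atTop := liminf_le_liminf (Eventually.of_forall hbound)
    _ = K * (2 * B) ^ q := hlim.liminf_eq
    _ = _ := by
        rw [ENNReal.mul_rpow_of_nonneg _ _ hq.le, ENNReal.coe_mul,
          ENNReal.coe_rpow_of_nonneg _ hq.le, mul_assoc]
        rfl

lemma lintegral_smul_scale (N : ℕ) {R : ℝ} (hR : 0 < R) {f : EuclideanSpace ℝ (Fin N) → ℝ≥0∞}
    (hf : Measurable f) :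
    ∫⁻ x, f x = ENNReal.ofReal (R ^ (N : ℝ)) * ∫⁻ x, f (R • x) := by
  have h1 : ∫⁻ x, f (R • x) = ∫⁻ x, f x ∂(Measure.map (R • ·) volume) :=
    (lintegral_map hf (measurable_const_smul R)).symm
  rw [h1, Measure.map_addHaar_smul _ hR.ne', lintegral_smul_measure, smul_eq_mul, ← mul_assoc,
    ← ENNReal.ofReal_mul (by positivity), finrank_euclideanSpace_fin, Real.rpow_natCast,
    abs_of_pos (by positivity), mul_inv_cancel₀ (by positivity)]
  simp

/-- Kernel near the origin. -/
lemma kernel_in (N : ℕ) (hN : 1 ≤ N) {α : ℝ} (hα : 0 < α) :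
    ∃ c : ℝ≥0, ∀ R : ℝ, 0 < R →
      ∫⁻ x : EuclideanSpace ℝ (Fin N), (Metric.ball 0 R).indicator
        (fun x => ENNReal.ofReal (‖x‖ ^ (α - N))) x ≤ c * ENNReal.ofReal (R ^ α) := by
  have hint : IntegrableOn (fun x : EuclideanSpace ℝ (Fin N) => ‖x‖ ^ (α - N))
      (Metric.ball 0 1) := by
    refine integrableOn_ball_of_norm_le_rpow (C := 1) (α := N - α) ?_ ?_ ?_ ?_
    · simpa using hN
    · simp [hα]
    · refine Eventually.of_forall fun x => ?_
      rw [Real.norm_of_nonneg (by positivity), one_mul, neg_sub]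
    · exact (measurable_norm.pow_const _).aestronglyMeasurable
  have hfin := hint.lintegral_lt_top
  refine ⟨(∫⁻ x in Metric.ball (0 : EuclideanSpace ℝ (Fin N)) 1,
    ENNReal.ofReal (‖x‖ ^ (α - N))).toNNReal, fun R hR => ?_⟩
  rw [ENNReal.coe_toNNReal hfin.ne, lintegral_smul_scale N hR, ← lintegral_indicator
    measurableSet_ball]
  · have : ∀ x : EuclideanSpace ℝ (Fin N), (Metric.ball 0 R).indicator
        (fun x => ENNReal.ofReal (‖x‖ ^ (α - N))) (R • x) = ENNReal.ofReal (R ^ (α - N)) *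
        (Metric.ball 0 1).indicator (fun x => ENNReal.ofReal (‖x‖ ^ (α - N))) x := by
      intro x
      have hiff : R • x ∈ Metric.ball (0 : EuclideanSpace ℝ (Fin N)) R ↔
          x ∈ Metric.ball (0 : EuclideanSpace ℝ (Fin N)) 1 := by
        rw [mem_ball_zero_iff, mem_ball_zero_iff, norm_smul, Real.norm_of_nonneg hR.le]
        exact mul_lt_iff_lt_one_right hR
      by_cases hx : x ∈ Metric.ball (0 : EuclideanSpace ℝ (Fin N)) 1
      · rw [indicator_of_mem hx, indicator_of_mem (hiff.2 hx), norm_smul,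
          Real.norm_of_nonneg hR.le, Real.mul_rpow hR.le (norm_nonneg _),
          ENNReal.ofReal_mul (by positivity)]
      · rw [indicator_of_notMem hx, indicator_of_notMem (fun h => hx (hiff.1 h)), mul_zero]
    simp_rw [this]
    rw [lintegral_const_mul, ← mul_assoc, ← ENNReal.ofReal_mul (by positivity),
      ← Real.rpow_add hR, mul_comm]
    · simp
    · exact Measurable.indicator (by fun_prop) measurableSet_ball
  · exact Measurable.indicator (by fun_prop) measurableSet_ball

/-- Kernel at infinity. -/
lemma kernel_out (N : ℕ) (hN : 1 ≤ N) :
    ∃ c : ℝ≥0, ∀ R : ℝ, 0 < R →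
      ∫⁻ x : EuclideanSpace ℝ (Fin N), (Metric.ball 0 R)ᶜ.indicator
        (fun x => ENNReal.ofReal (‖x‖ ^ (-(2 * N : ℝ)))) x ≤ c * ENNReal.ofReal (R ^ (-N : ℝ)) := by
  have hN' : (0 : ℝ) < N := by exact_mod_cast hN
  have hfin0 := finite_integral_one_add_norm (E := EuclideanSpace ℝ (Fin N)) (μ := volume)
    (r := 2 * N) (by simp; linarith)
  have hfin : ∫⁻ x : EuclideanSpace ℝ (Fin N), (Metric.ball 0 1)ᶜ.indicator
        (fun x => ENNReal.ofReal (‖x‖ ^ (-(2 * N : ℝ)))) x < ∞ := by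
    have : ∫⁻ x : EuclideanSpace ℝ (Fin N), (Metric.ball 0 1)ᶜ.indicator
        (fun x => ENNReal.ofReal (‖x‖ ^ (-(2 * N : ℝ)))) x ≤
        ENNReal.ofReal (2 ^ (2 * N : ℝ)) * ∫⁻ x : EuclideanSpace ℝ (Fin N),
          ENNReal.ofReal ((1 + ‖x‖) ^ (-(2 * N : ℝ))) := by
      rw [← lintegral_const_mul _ (by fun_prop)]
      gcongr with x
      by_cases hx : x ∈ (Metric.ball (0 : EuclideanSpace ℝ (Fin N)) 1)ᶜ
      swap
      · rw [indicator_of_notMem hx]; exact zero_le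
      rw [indicator_of_mem hx]
      rw [mem_compl_iff, mem_ball_zero_iff, not_lt] at hx
      rw [← ENNReal.ofReal_mul (by positivity)]
      apply ENNReal.ofReal_le_ofReal
      have h2 : (0 : ℝ) < ‖x‖ := by linarith
      have : (2 * ‖x‖) ^ (-(2 * N : ℝ)) ≤ (1 + ‖x‖) ^ (-(2 * N : ℝ)) :=
        Real.rpow_le_rpow_of_nonpos (by linarith) (by linarith) (by linarith)
      rw [Real.mul_rpow (by norm_num) h2.le] at this
      calc ‖x‖ ^ (-(2 * N : ℝ)) = 2 ^ (2 * N : ℝ) * (2 ^ (-(2 * N : ℝ)) * ‖x‖ ^ (-(2 * N : ℝ))) := by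
            rw [← mul_assoc, ← Real.rpow_add (by norm_num)]; simp
        _ ≤ _ := by gcongr
    refine this.trans_lt (ENNReal.mul_lt_top ENNReal.ofReal_lt_top hfin0)
  refine ⟨(∫⁻ x : EuclideanSpace ℝ (Fin N), (Metric.ball 0 1)ᶜ.indicator
        (fun x => ENNReal.ofReal (‖x‖ ^ (-(2 * N : ℝ)))) x).toNNReal, fun R hR => ?_⟩
  rw [ENNReal.coe_toNNReal hfin.ne, lintegral_smul_scale N hR]
  · have : ∀ x : EuclideanSpace ℝ (Fin N), (Metric.ball 0 R)ᶜ.indicator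
        (fun x => ENNReal.ofReal (‖x‖ ^ (-(2 * N : ℝ)))) (R • x)
        = ENNReal.ofReal (R ^ (-(2 * N : ℝ))) *
        (Metric.ball 0 1)ᶜ.indicator (fun x => ENNReal.ofReal (‖x‖ ^ (-(2 * N : ℝ)))) x := by
      intro x
      have hiff : R • x ∈ (Metric.ball (0 : EuclideanSpace ℝ (Fin N)) R)ᶜ ↔
          x ∈ (Metric.ball (0 : EuclideanSpace ℝ (Fin N)) 1)ᶜ := by
        rw [mem_compl_iff, mem_compl_iff, mem_ball_zero_iff, mem_ball_zero_iff, norm_smul,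
          Real.norm_of_nonneg hR.le]
        exact not_congr (mul_lt_iff_lt_one_right hR)
      by_cases hx : x ∈ (Metric.ball (0 : EuclideanSpace ℝ (Fin N)) 1)ᶜ
      · rw [indicator_of_mem hx, indicator_of_mem (hiff.2 hx), norm_smul,
          Real.norm_of_nonneg hR.le, Real.mul_rpow hR.le (norm_nonneg _),
          ENNReal.ofReal_mul (by positivity)]
      · rw [indicator_of_notMem hx, indicator_of_notMem (fun h => hx (hiff.1 h)), mul_zero]
    simp_rw [this]
    rw [lintegral_const_mul, ← mul_assoc, ← ENNReal.ofReal_mul (by positivity),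
      ← Real.rpow_add hR, mul_comm, show (N : ℝ) + -(2 * N) = -N by ring]
    exact Measurable.indicator (by fun_prop) measurableSet_ball.compl
  · exact Measurable.indicator (by fun_prop) measurableSet_ball.compl

/-- The pointwise estimate behind the diagonal Hardy-Littlewood-Sobolev inequality. -/
lemma hls_pointwise (N : ℕ) (hN : 1 ≤ N) {α : ℝ} (hα : 0 < α) (hαN : α < N) :
    ∃ K : ℝ≥0, ∀ f : EuclideanSpace ℝ (Fin N) → ℝ≥0∞, Measurable f →
      ∫⁻ x, f x ^ (2 * N / (N + α)) ≠ 0 → ∫⁻ x, f x ^ (2 * N / (N + α)) ≠ ∞ →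
      ∀ (t : ℝ≥0∞), t ≠ ∞ → ∀ x : EuclideanSpace ℝ (Fin N),
      t * ∫⁻ y, {y | f y ≤ t}.indicator (fun y => ENNReal.ofReal (‖x - y‖ ^ (α - N)) * f y) y
        ≤ K * (∫⁻ x, f x ^ (2 * N / (N + α))) ^ (α / N) * t ^ (2 * N / (N + α)) := by
  have hN' : (0 : ℝ) < N := by exact_mod_cast hN
  have hNa : 0 < (N : ℝ) - α := by linarith
  obtain ⟨c₁, hc₁⟩ := kernel_in N hN hα
  obtain ⟨c₂, hc₂⟩ := kernel_out N hN
  refine ⟨c₁ + c₂ ^ ((N - α) / (2 * N)), fun f hf hA0 hAtop t ht x => ?_⟩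
  set p : ℝ := 2 * N / (N + α) with hp
  have hp0 : 0 < p := by positivity
  have hp1 : 1 < p := by rw [hp, one_lt_div (by positivity)]; linarith
  set A := ∫⁻ x, f x ^ p with hA
  by_cases ht0 : t = 0
  · rw [ht0, zero_mul]; exact zero_le
  set q : ℝ := 2 * N / (N - α) with hq
  have hq0 : 0 < q := by positivity
  have hpq : q.HolderConjugate p := by
    refine (Real.holderConjugate_iff).2 ⟨by rw [hq, one_lt_div hNa]; linarith, ?_⟩
    rw [hp, hq]; field_simp; ring
  -- real versions
  set a : ℝ := (A ^ (1 / p)).toReal with ha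
  have haA : A ^ (1 / p) = ENNReal.ofReal a := by
    rw [ha, ENNReal.ofReal_toReal (ENNReal.rpow_ne_top_of_nonneg (by positivity) hAtop)]
  have ha0 : 0 < a := by
    refine ENNReal.toReal_pos (ENNReal.rpow_pos (pos_iff_ne_zero.2 hA0) hAtop).ne'
      (ENNReal.rpow_ne_top_of_nonneg (by positivity) hAtop)
  set s : ℝ := t.toReal with hs
  have hst : t = ENNReal.ofReal s := by rw [hs, ENNReal.ofReal_toReal ht]
  have hs0 : 0 < s := ENNReal.toReal_pos ht0 ht
  set R : ℝ := (a / s) ^ (2 / (N + α)) with hR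
  have hR0 : 0 < R := by positivity
  set k : EuclideanSpace ℝ (Fin N) → ℝ≥0∞ := fun z => ENNReal.ofReal (‖z‖ ^ (α - N)) with hk
  have hkm : Measurable k := by fun_prop
  set B := Metric.ball (0 : EuclideanSpace ℝ (Fin N)) R with hB
  have hkin : Measurable (B.indicator k) := hkm.indicator measurableSet_ball
  have hkout : Measurable (Bᶜ.indicator k) := hkm.indicator measurableSet_ball.compl
  have hI1 : ∫⁻ y, B.indicator k (x - y) * t ≤ c₁ * ENNReal.ofReal (R ^ α) * t := by
    rw [lintegral_mul_const _ (by fun_prop), lintegral_sub_left_eq_self (fun z => B.indicator k z) x]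
    gcongr
    exact hc₁ R hR0
  have hI2 : ∫⁻ y, Bᶜ.indicator k (x - y) * f y ≤
      (c₂ * ENNReal.ofReal (R ^ (-N : ℝ))) ^ (1 / q) * A ^ (1 / p) := by
    have h1 := ENNReal.lintegral_mul_le_Lp_mul_Lq volume hpq
      (f := fun y => Bᶜ.indicator k (x - y)) (g := f) (by fun_prop) hf.aemeasurable
    refine h1.trans ?_
    gcongr
    rw [lintegral_sub_left_eq_self (fun z => Bᶜ.indicator k z ^ q) x]
    refine le_trans (le_of_eq ?_) (hc₂ R hR0)
    congr with z
    by_cases hz : z ∈ Bᶜ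
    · rw [indicator_of_mem hz, indicator_of_mem hz, hk]
      simp only
      rw [ENNReal.ofReal_rpow_of_nonneg (by positivity) hq0.le, ← Real.rpow_mul (norm_nonneg _)]
      congr 2
      rw [hq]; field_simp; ring
    · rw [indicator_of_notMem hz, indicator_of_notMem hz, ENNReal.zero_rpow_of_pos hq0]
  have hsplit : ∫⁻ y, {y | f y ≤ t}.indicator (fun y => k (x - y) * f y) y ≤
      c₁ * ENNReal.ofReal (R ^ α) * t +
        (c₂ * ENNReal.ofReal (R ^ (-N : ℝ))) ^ (1 / q) * A ^ (1 / p) := by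
    refine le_trans ?_ (add_le_add hI1 hI2)
    rw [← lintegral_add_left (by fun_prop)]
    gcongr with y
    by_cases hy : f y ≤ t
    · rw [indicator_of_mem (by exact hy)]
      by_cases hz : x - y ∈ B
      · rw [indicator_of_mem hz]
        exact le_add_right (by gcongr)
      · rw [indicator_of_mem (show x - y ∈ Bᶜ from hz)]
        exact le_add_left le_rfl
    · rw [indicator_of_notMem (by exact hy)]
      exact zero_le
  have e1 : R ^ α * s * s = a ^ (2 * α / (N + α)) * s ^ p := by
    rw [hR, ← Real.rpow_mul (by positivity), Real.div_rpow ha0.le hs0.le, div_mul_eq_mul_div,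
      div_mul_eq_mul_div, div_eq_iff (by positivity), mul_assoc (a ^ _) (s ^ p),
      ← Real.rpow_add hs0]
    have : p + 2 / (N + α) * α = 2 := by rw [hp]; field_simp
    rw [this, Real.rpow_two]
    ring_nf
  have e2 : R ^ (-(N - α) / 2) * a * s = a ^ (2 * α / (N + α)) * s ^ p := by
    rw [hR, ← Real.rpow_mul (by positivity), Real.div_rpow ha0.le hs0.le, div_mul_eq_mul_div,
      div_mul_eq_mul_div, div_eq_iff (by positivity), mul_assoc (a ^ _) (s ^ p),
      ← Real.rpow_add hs0]
    have h1 : p + 2 / (N + α) * (-(N - α) / 2) = 1 := by rw [hp]; field_simp; ring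
    have h2 : 2 * α / (N + α) = 2 / (N + α) * (-(N - α) / 2) + 1 := by field_simp; ring
    rw [h1, Real.rpow_one, h2, Real.rpow_add ha0, Real.rpow_one]
  have e3 : A ^ (α / N) = ENNReal.ofReal (a ^ (2 * α / (N + α))) := by
    rw [← ENNReal.ofReal_rpow_of_pos ha0, ← haA, ← ENNReal.rpow_mul]
    congr 1
    rw [hp]; field_simp
  have e4 : t ^ p = ENNReal.ofReal (s ^ p) := by rw [hst, ENNReal.ofReal_rpow_of_pos hs0]
  have e5 : (c₂ * ENNReal.ofReal (R ^ (-N : ℝ))) ^ (1 / q) =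
      (c₂ : ℝ≥0∞) ^ ((N - α) / (2 * N)) * ENNReal.ofReal (R ^ (-(N - α) / 2)) := by
    rw [ENNReal.mul_rpow_of_nonneg _ _ (by positivity),
      ENNReal.ofReal_rpow_of_nonneg (by positivity) (by positivity), ← Real.rpow_mul hR0.le]
    congr 2
    · rw [hq]; field_simp
    · congr 1; rw [hq]; field_simp
  calc _ ≤ t * (c₁ * ENNReal.ofReal (R ^ α) * t +
        (c₂ * ENNReal.ofReal (R ^ (-N : ℝ))) ^ (1 / q) * A ^ (1 / p)) := by gcongr
    _ = c₁ * ENNReal.ofReal (R ^ α * s * s) +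
        (c₂ : ℝ≥0∞) ^ ((N - α) / (2 * N)) * ENNReal.ofReal (R ^ (-(N - α) / 2) * a * s) := by
        rw [e5, haA, hst, ENNReal.ofReal_mul (by positivity), ENNReal.ofReal_mul (by positivity),
          ENNReal.ofReal_mul (by positivity), ENNReal.ofReal_mul (by positivity)]
        ring
    _ = _ := by
        rw [e1, e2, e3, e4, ENNReal.ofReal_mul (by positivity), ENNReal.coe_add,
          ENNReal.coe_rpow_of_nonneg _ (by positivity)]
        ring

/-- Diagonal Hardy-Littlewood-Sobolev inequality. -/
lemma hls (N : ℕ) (hN : 1 ≤ N) {α : ℝ} (hα : 0 < α) (hαN : α < N) :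
    ∃ K : ℝ≥0, ∀ f : EuclideanSpace ℝ (Fin N) → ℝ≥0∞, Measurable f → (∀ x, f x ≠ ∞) →
      ∫⁻ x, f x ^ (2 * N / (N + α)) ≠ ∞ →
      ∫⁻ x, ∫⁻ y, ENNReal.ofReal (‖x - y‖ ^ (α - N)) * f y * f x
        ≤ K * (∫⁻ x, f x ^ (2 * N / (N + α))) ^ (1 + α / N) := by
  have hN' : (0 : ℝ) < N := by exact_mod_cast hN
  obtain ⟨K, hK⟩ := hls_pointwise N hN hα hαN
  refine ⟨2 * K, fun f hf hft hAtop => ?_⟩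
  set p : ℝ := 2 * N / (N + α) with hp
  have hp0 : 0 < p := by positivity
  set A := ∫⁻ x, f x ^ p with hA
  by_cases hA0 : A = 0
  · have h0 : ∀ᵐ x, f x = 0 := by
      rw [hA, lintegral_eq_zero_iff (by fun_prop)] at hA0
      filter_upwards [hA0] with x hx
      simpa [hp0, hp0.le, not_lt.2 hp0.le] using hx
    have : ∫⁻ x, ∫⁻ y, ENNReal.ofReal (‖x - y‖ ^ (α - N)) * f y * f x = 0 := by
      rw [← lintegral_zero (α := EuclideanSpace ℝ (Fin N)) (μ := volume)]
      refine lintegral_congr_ae ?_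
      filter_upwards [h0] with x hx
      simp [hx]
    rw [this]; exact zero_le
  set G : EuclideanSpace ℝ (Fin N) → EuclideanSpace ℝ (Fin N) → ℝ≥0∞ := fun x y =>
    f x * {y | f y ≤ f x}.indicator (fun y => ENNReal.ofReal (‖x - y‖ ^ (α - N)) * f y) y with hG
  have hGm : Measurable (uncurry G) := by
    have : uncurry G = fun z : EuclideanSpace ℝ (Fin N) × EuclideanSpace ℝ (Fin N) => f z.1 *
        {z : EuclideanSpace ℝ (Fin N) × EuclideanSpace ℝ (Fin N) | f z.2 ≤ f z.1}.indicator
          (fun z => ENNReal.ofReal (‖z.1 - z.2‖ ^ (α - N)) * f z.2) z := by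
      ext ⟨x, y⟩
      simp [G, uncurry, indicator]
    rw [this]
    refine (by fun_prop : Measurable fun z : EuclideanSpace ℝ (Fin N) ×
      EuclideanSpace ℝ (Fin N) => f z.1).mul (Measurable.indicator (by fun_prop) ?_)
    exact measurableSet_le (by fun_prop) (by fun_prop)
  have hGint : ∫⁻ x, ∫⁻ y, G x y ≤ K * A ^ (1 + α / N) := by
    calc ∫⁻ x, ∫⁻ y, G x y ≤ ∫⁻ x, K * A ^ (α / N) * f x ^ p := by
          gcongr with x
          rw [hG]
          simp only
          rw [lintegral_const_mul']
          · exact hK f hf hA0 hAtop (f x) (hft x) x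
          · exact hft x
      _ = K * A ^ (1 + α / N) := by
          rw [lintegral_const_mul _ (by fun_prop), ENNReal.rpow_add _ _ hA0 hAtop,
            ENNReal.rpow_one]
          ring
  calc ∫⁻ x, ∫⁻ y, ENNReal.ofReal (‖x - y‖ ^ (α - N)) * f y * f x
      ≤ ∫⁻ x, ∫⁻ y, (G x y + G y x) := by
        gcongr with x y
        rcases le_total (f y) (f x) with h | h
        · refine le_add_right (le_of_eq ?_)
          rw [hG]; simp only
          rw [indicator_of_mem (by exact h)]
          ring
        · refine le_add_left (le_of_eq ?_)
          rw [hG]; simp only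
          rw [indicator_of_mem (by exact h), norm_sub_rev]
          ring
    _ = ∫⁻ x, ((∫⁻ y, G x y) + ∫⁻ y, G y x) := by
        congr with x
        rw [lintegral_add_left]
        exact hGm.comp (measurable_const.prodMk measurable_id)
    _ = (∫⁻ x, ∫⁻ y, G x y) + ∫⁻ x, ∫⁻ y, G y x := by
        rw [lintegral_add_left]
        exact hGm.lintegral_prod_right'
    _ = (∫⁻ x, ∫⁻ y, G x y) + ∫⁻ x, ∫⁻ y, G x y := by
        congr 1
        exact lintegral_lintegral_swap (hGm.comp measurable_swap).aemeasurable
    _ ≤ K * A ^ (1 + α / N) + K * A ^ (1 + α / N) := by gcongr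
    _ = _ := by push_cast; ring

/-- The nonlocal term is controlled by the stated superquadratic quantity. -/
lemma nonlocal_bound
    (N : ℕ) (hN : 3 ≤ N) (α : ℝ) (hα : 0 < α) (hαN : α < N) (c : ℝ)
    (F : ℝ → ℝ) (hFcont : Continuous F) (C : ℝ) (hC : 0 < C)
    (hgrowth : ∀ s : ℝ, |F s| ≤ C * (|s| ^ (1 + α / N) + |s| ^ (((N : ℝ) + α) / ((N : ℝ) - 2)))) :
    ∃ C' > (0 : ℝ), ∀ u : EuclideanSpace ℝ (Fin N) → ℝ,
      Differentiable ℝ u →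
      Integrable (fun x => ‖fderiv ℝ u x‖ ^ 2) volume →
      Integrable (fun x => (u x) ^ 2) volume →
      (∫ x, (∫ y, c * ‖x - y‖ ^ (α - (N : ℝ)) * F (u y)) * F (u x))
        ≤ C' * ((∫ x, (u x) ^ 2) ^ (1 + α / N)
            + (∫ x, ‖fderiv ℝ u x‖ ^ 2) ^ (((N : ℝ) + α) / ((N : ℝ) - 2))) := by
  have hN3 : (3 : ℝ) ≤ N := by exact_mod_cast hN
  have hN2 : (0 : ℝ) < N - 2 := by linarith
  have hN0 : (0 : ℝ) < N := by linarith
  obtain ⟨S, hS⟩ := sobolev N hN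
  obtain ⟨K, hK⟩ := hls N (by omega) hα hαN
  set p : ℝ := 2 * N / (N + α) with hp
  have hp0 : 0 < p := by positivity
  have hp1 : 1 ≤ p := by rw [hp, one_le_div (by positivity)]; linarith
  set m : ℝ := 1 + α / N with hm
  have hm0 : 0 < m := by positivity
  have hm1 : 1 ≤ m := by rw [hm]; linarith [show 0 < α / N by positivity]
  set r : ℝ := ((N : ℝ) + α) / ((N : ℝ) - 2) with hr
  have hr0 : 0 < r := by positivity
  set q : ℝ := (N : ℝ) / (N - 2) with hq
  have hq0 : 0 < q := by positivity
  set p' : ℝ := 2 * (N : ℝ) / (N - 2) with hp'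
  have hmp : m * p = 2 := by rw [hm, hp]; field_simp
  have hrp : r * p = p' := by rw [hr, hp, hp']; field_simp
  have hqm : q * m = r := by rw [hq, hm, hr]; field_simp
  -- the constant
  obtain ⟨L, hL⟩ : ∃ L : ℝ≥0∞, L = ‖c‖ₑ * (K * ((ENNReal.ofReal C ^ p * 2 ^ (p - 1) * (1 + S)) ^ m
      * 2 ^ (m - 1))) := ⟨_, rfl⟩
  have hLtop : L ≠ ∞ := by
    rw [hL]
    have h2 : ∀ z : ℝ, (2 : ℝ≥0∞) ^ z ≠ ∞ := fun z =>
      ENNReal.rpow_ne_top_of_ne_zero (by norm_num) (by norm_num)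
    refine ENNReal.mul_ne_top enorm_ne_top (ENNReal.mul_ne_top ENNReal.coe_ne_top
      (ENNReal.mul_ne_top (ENNReal.rpow_ne_top_of_nonneg hm0.le
        (ENNReal.mul_ne_top (ENNReal.mul_ne_top (ENNReal.rpow_ne_top_of_nonneg hp0.le
          ENNReal.ofReal_ne_top) (h2 _)) (by simp))) (h2 _)))
  refine ⟨L.toReal + 1, by positivity, fun u hu hgrad hu2 => ?_⟩
  have hcont := hu.continuous
  have ha0 : 0 ≤ ∫ x, (u x) ^ 2 := integral_nonneg fun x => by positivity
  have hb0 : 0 ≤ ∫ x, ‖fderiv ℝ u x‖ ^ 2 := integral_nonneg fun x => by positivity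
  have ha : ∫⁻ x, ‖u x‖ₑ ^ (2 : ℝ) = ENNReal.ofReal (∫ x, (u x) ^ 2) := by
    rw [ofReal_integral_eq_lintegral_ofReal hu2 (Eventually.of_forall fun x => by positivity)]
    congr with x
    rw [← ofReal_norm, ENNReal.ofReal_rpow_of_nonneg (norm_nonneg _) (by norm_num)]
    simp
  have hb : ∫⁻ x, ‖fderiv ℝ u x‖ₑ ^ (2 : ℝ) = ENNReal.ofReal (∫ x, ‖fderiv ℝ u x‖ ^ 2) := by
    rw [ofReal_integral_eq_lintegral_ofReal hgrad (Eventually.of_forall fun x => by positivity)]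
    congr with x
    rw [← ofReal_norm, ENNReal.ofReal_rpow_of_nonneg (norm_nonneg _) (by norm_num)]
    simp
  set a := ∫ x, (u x) ^ 2
  set b := ∫ x, ‖fderiv ℝ u x‖ ^ 2
  have hSob : ∫⁻ x, ‖u x‖ₑ ^ p' ≤ S * ENNReal.ofReal b ^ q := by
    rw [← hb]
    exact hS u hu (by rw [ha]; exact ENNReal.ofReal_ne_top)
  set f : EuclideanSpace ℝ (Fin N) → ℝ≥0∞ := fun x => ‖F (u x)‖ₑ with hf
  have hfm : Measurable f := by fun_prop
  have hfbound : ∀ x, f x ≤ ENNReal.ofReal C * (‖u x‖ₑ ^ m + ‖u x‖ₑ ^ r) := by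
    intro x
    have h1 : ∀ z : ℝ, 0 < z → ‖u x‖ₑ ^ z = ENNReal.ofReal (|u x| ^ z) := by
      intro z hz
      rw [← ofReal_norm, ENNReal.ofReal_rpow_of_nonneg (norm_nonneg _) hz.le, Real.norm_eq_abs]
    rw [h1 m hm0, h1 r hr0, ← ENNReal.ofReal_add (by positivity) (by positivity),
      ← ENNReal.ofReal_mul hC.le]
    simp only [hf]
    rw [← ofReal_norm, Real.norm_eq_abs]
    exact ENNReal.ofReal_le_ofReal (hgrowth (u x))
  set A := ∫⁻ x, f x ^ p with hA
  have hAle : A ≤ (ENNReal.ofReal C ^ p * 2 ^ (p - 1) * (1 + S)) *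
      (ENNReal.ofReal a + ENNReal.ofReal b ^ q) := by
    calc A ≤ ∫⁻ x, ENNReal.ofReal C ^ p * 2 ^ (p - 1) * (‖u x‖ₑ ^ (2 : ℝ) + ‖u x‖ₑ ^ p') := by
          rw [hA]
          gcongr with x
          calc f x ^ p ≤ (ENNReal.ofReal C * (‖u x‖ₑ ^ m + ‖u x‖ₑ ^ r)) ^ p := by
                gcongr; exact hfbound x
            _ = ENNReal.ofReal C ^ p * (‖u x‖ₑ ^ m + ‖u x‖ₑ ^ r) ^ p :=
                ENNReal.mul_rpow_of_nonneg _ _ hp0.le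
            _ ≤ ENNReal.ofReal C ^ p * (2 ^ (p - 1) * ((‖u x‖ₑ ^ m) ^ p + (‖u x‖ₑ ^ r) ^ p)) := by
                gcongr
                exact ENNReal.rpow_add_le_mul_rpow_add_rpow _ _ hp1
            _ = _ := by rw [← ENNReal.rpow_mul, ← ENNReal.rpow_mul, hmp, hrp, mul_assoc]
      _ = ENNReal.ofReal C ^ p * 2 ^ (p - 1) * (ENNReal.ofReal a + ∫⁻ x, ‖u x‖ₑ ^ p') := by
          rw [lintegral_const_mul _ (by fun_prop), lintegral_add_left (by fun_prop), ha]
      _ ≤ ENNReal.ofReal C ^ p * 2 ^ (p - 1) * ((1 + S) *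
            (ENNReal.ofReal a + ENNReal.ofReal b ^ q)) := by
          gcongr
          rw [mul_add]
          gcongr
          · exact le_mul_of_one_le_left' (le_add_right le_rfl)
          · refine hSob.trans ?_
            gcongr
            exact le_add_left le_rfl
      _ = _ := by rw [mul_assoc, mul_assoc, mul_assoc]
  have hC2 : ENNReal.ofReal C ^ p * 2 ^ (p - 1) * (1 + (S : ℝ≥0∞)) ≠ ∞ :=
    ENNReal.mul_ne_top (ENNReal.mul_ne_top (ENNReal.rpow_ne_top_of_nonneg hp0.le
      ENNReal.ofReal_ne_top) (ENNReal.rpow_ne_top_of_ne_zero (by norm_num) (by norm_num))) (by simp)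
  have hAtop : A ≠ ∞ := by
    refine ne_top_of_le_ne_top (ENNReal.mul_ne_top hC2 ?_) hAle
    exact ENNReal.add_ne_top.2 ⟨ENNReal.ofReal_ne_top,
      ENNReal.rpow_ne_top_of_nonneg hq0.le ENNReal.ofReal_ne_top⟩
  have hHLS := hK f hfm (fun x => enorm_ne_top) hAtop
  have hAm : A ^ m ≤ (ENNReal.ofReal C ^ p * 2 ^ (p - 1) * (1 + S)) ^ m * 2 ^ (m - 1) *
      ENNReal.ofReal (a ^ m + b ^ r) := by
    calc A ^ m ≤ ((ENNReal.ofReal C ^ p * 2 ^ (p - 1) * (1 + S)) *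
          (ENNReal.ofReal a + ENNReal.ofReal b ^ q)) ^ m := by gcongr
      _ = (ENNReal.ofReal C ^ p * 2 ^ (p - 1) * (1 + S)) ^ m *
          (ENNReal.ofReal a + ENNReal.ofReal b ^ q) ^ m := ENNReal.mul_rpow_of_nonneg _ _ hm0.le
      _ ≤ (ENNReal.ofReal C ^ p * 2 ^ (p - 1) * (1 + S)) ^ m *
          (2 ^ (m - 1) * (ENNReal.ofReal a ^ m + (ENNReal.ofReal b ^ q) ^ m)) := by
          gcongr
          exact ENNReal.rpow_add_le_mul_rpow_add_rpow _ _ hm1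
      _ = _ := by
          rw [← ENNReal.rpow_mul, hqm, ENNReal.ofReal_rpow_of_nonneg ha0 hm0.le,
            ENNReal.ofReal_rpow_of_nonneg hb0 hr0.le,
            ← ENNReal.ofReal_add (by positivity) (by positivity)]
          ring
  set T := ∫ x, (∫ y, c * ‖x - y‖ ^ (α - (N : ℝ)) * F (u y)) * F (u x) with hT
  have hTle : ‖T‖ₑ ≤ ‖c‖ₑ * ∫⁻ x, ∫⁻ y, ENNReal.ofReal (‖x - y‖ ^ (α - N)) * f y * f x := by
    calc ‖T‖ₑ ≤ ∫⁻ x, ‖(∫ y, c * ‖x - y‖ ^ (α - (N : ℝ)) * F (u y)) * F (u x)‖ₑ :=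
          enorm_integral_le_lintegral_enorm _
      _ ≤ ∫⁻ x, ‖c‖ₑ * ∫⁻ y, ENNReal.ofReal (‖x - y‖ ^ (α - N)) * f y * f x := by
          gcongr with x
          rw [enorm_mul, lintegral_mul_const _ (by fun_prop), ← mul_assoc]
          gcongr
          · rw [← lintegral_const_mul _ (by fun_prop)]
            refine (enorm_integral_le_lintegral_enorm _).trans (le_of_eq ?_)
            congr with y
            rw [enorm_mul, enorm_mul, mul_assoc,
              Real.enorm_of_nonneg (show 0 ≤ ‖x - y‖ ^ (α - (N : ℝ)) by positivity)]
      _ = _ := lintegral_const_mul' _ _ enorm_ne_top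
  have hfinal : ENNReal.ofReal T ≤ ENNReal.ofReal ((L.toReal + 1) * (a ^ m + b ^ r)) := by
    calc ENNReal.ofReal T ≤ ‖T‖ₑ := by
          rw [← ofReal_norm]; exact ENNReal.ofReal_le_ofReal (Real.le_norm_self T)
      _ ≤ ‖c‖ₑ * (K * ((ENNReal.ofReal C ^ p * 2 ^ (p - 1) * (1 + S)) ^ m * 2 ^ (m - 1) *
            ENNReal.ofReal (a ^ m + b ^ r))) := by
          refine hTle.trans ?_
          gcongr
          exact hHLS.trans (by gcongr)
      _ = L * ENNReal.ofReal (a ^ m + b ^ r) := by rw [hL]; ring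
      _ ≤ _ := by
          rw [ENNReal.ofReal_mul (by positivity)]
          gcongr
          rw [ENNReal.le_ofReal_iff_toReal_le hLtop (by positivity)]
          linarith
  exact (ENNReal.ofReal_le_ofReal_iff (by positivity)).1 hfinal

lemma small_power {C' m r : ℝ} (hC' : 0 < C') (hm : 1 < m) (hr : 1 < r) :
    ∃ δ > (0 : ℝ), ∀ a b : ℝ, 0 ≤ a → 0 ≤ b → b + a ≤ δ →
      C' * (a ^ m + b ^ r) ≤ 1 / 4 * (b + a) := by
  have key : ∀ z : ℝ, 1 < z → ∃ δ > (0 : ℝ), ∀ a : ℝ, 0 ≤ a → a ≤ δ → C' * a ^ z ≤ 1 / 4 * a := by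
    intro z hz
    have hz' : 0 < z - 1 := by linarith
    refine ⟨(1 / (4 * C')) ^ (1 / (z - 1)), by positivity, fun a ha hle => ?_⟩
    have h1 : a ^ (z - 1) ≤ 1 / (4 * C') := by
      calc a ^ (z - 1) ≤ ((1 / (4 * C')) ^ (1 / (z - 1))) ^ (z - 1) := by gcongr
        _ = 1 / (4 * C') := by
          rw [← Real.rpow_mul (by positivity), one_div_mul_cancel hz'.ne', Real.rpow_one]
    rcases ha.eq_or_lt with rfl | ha
    · rw [Real.zero_rpow (by linarith)]; simp
    have h2 : a ^ z = a ^ (z - 1) * a := by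
      rw [← Real.rpow_add_one ha.ne']; ring_nf
    rw [h2]
    calc C' * (a ^ (z - 1) * a) ≤ C' * (1 / (4 * C') * a) := by gcongr
      _ = 1 / 4 * a := by field_simp
  obtain ⟨δ₁, h₁, H₁⟩ := key m hm
  obtain ⟨δ₂, h₂, H₂⟩ := key r hr
  refine ⟨min δ₁ δ₂, lt_min h₁ h₂, fun a b ha hb hab => ?_⟩
  have e1 := H₁ a ha (by linarith [min_le_left δ₁ δ₂])
  have e2 := H₂ b hb (by linarith [min_le_right δ₁ δ₂])
  linarith

end ChoquardAux


/-- Mountain-pass geometry for the Choquard functional: the growth bound `(F₁)` combined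
with the Hardy–Littlewood–Sobolev and Sobolev inequalities bounds the nonlocal term by
`C'((∫|u|²)^(1+α/N) + (∫|∇u|²)^((N+α)/(N-2)))`; consequently, on a small ball
`‖u‖²_{H¹} ≤ δ` the nonlocal term is at most `¼‖u‖²_{H¹}` and `I(u) ≥ ¼‖u‖²_{H¹}`. -/
theorem choquard_mountain_pass_geometry
    (N : ℕ) (hN : 3 ≤ N) (α : ℝ) (hα : 0 < α) (hαN : α < N)
    (F : ℝ → ℝ) (hFcont : Continuous F) (C : ℝ) (hC : 0 < C)
    (hgrowth : ∀ s : ℝ, |F s| ≤ C * (|s| ^ (1 + α / N) + |s| ^ (((N : ℝ) + α) / ((N : ℝ) - 2)))) :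
    (∃ C' > (0 : ℝ), ∀ u : EuclideanSpace ℝ (Fin N) → ℝ,
      Differentiable ℝ u →
      Integrable (fun x => ‖fderiv ℝ u x‖ ^ 2) volume →
      Integrable (fun x => (u x) ^ 2) volume →
      (∫ x, (∫ y, (Real.Gamma (((N : ℝ) - α) / 2) /
          (Real.Gamma (α / 2) * Real.pi ^ ((N : ℝ) / 2) * 2 ^ α)) *
          ‖x - y‖ ^ (α - (N : ℝ)) * F (u y)) * F (u x))
        ≤ C' * ((∫ x, (u x) ^ 2) ^ (1 + α / N)
            + (∫ x, ‖fderiv ℝ u x‖ ^ 2) ^ (((N : ℝ) + α) / ((N : ℝ) - 2))))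
    ∧ (∃ δ > (0 : ℝ), ∀ u : EuclideanSpace ℝ (Fin N) → ℝ,
      Differentiable ℝ u →
      Integrable (fun x => ‖fderiv ℝ u x‖ ^ 2) volume →
      Integrable (fun x => (u x) ^ 2) volume →
      (∫ x, ‖fderiv ℝ u x‖ ^ 2) + (∫ x, (u x) ^ 2) ≤ δ →
      (∫ x, (∫ y, (Real.Gamma (((N : ℝ) - α) / 2) /
          (Real.Gamma (α / 2) * Real.pi ^ ((N : ℝ) / 2) * 2 ^ α)) *
          ‖x - y‖ ^ (α - (N : ℝ)) * F (u y)) * F (u x))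
        ≤ 1 / 4 * ((∫ x, ‖fderiv ℝ u x‖ ^ 2) + (∫ x, (u x) ^ 2))
      ∧ 1 / 4 * ((∫ x, ‖fderiv ℝ u x‖ ^ 2) + (∫ x, (u x) ^ 2))
        ≤ 1 / 2 * ((∫ x, ‖fderiv ℝ u x‖ ^ 2) + (∫ x, (u x) ^ 2))
          - 1 / 2 * (∫ x, (∫ y, (Real.Gamma (((N : ℝ) - α) / 2) /
              (Real.Gamma (α / 2) * Real.pi ^ ((N : ℝ) / 2) * 2 ^ α)) *
              ‖x - y‖ ^ (α - (N : ℝ)) * F (u y)) * F (u x))) := by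

  obtain ⟨C', hC', H⟩ := ChoquardAux.nonlocal_bound N hN α hα hαN
    (Real.Gamma (((N : ℝ) - α) / 2) / (Real.Gamma (α / 2) * Real.pi ^ ((N : ℝ) / 2) * 2 ^ α))
    F hFcont C hC hgrowth
  refine ⟨⟨C', hC', H⟩, ?_⟩
  have hN3 : (3 : ℝ) ≤ N := by exact_mod_cast hN
  obtain ⟨δ, hδ, Hδ⟩ := ChoquardAux.small_power (m := 1 + α / N)
    (r := ((N : ℝ) + α) / ((N : ℝ) - 2)) hC'
    (by have : 0 < α / N := by positivity
        linarith)
    (by rw [one_lt_div (by linarith)]; linarith)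
  refine ⟨δ, hδ, fun u hu hgrad hu2 hle => ?_⟩
  have h1 := H u hu hgrad hu2
  have ha : 0 ≤ ∫ x, (u x) ^ 2 := integral_nonneg fun x => by positivity
  have hb : 0 ≤ ∫ x, ‖fderiv ℝ u x‖ ^ 2 := integral_nonneg fun x => by positivity
  have h2 := Hδ (∫ x, (u x) ^ 2) (∫ x, ‖fderiv ℝ u x‖ ^ 2) ha hb hle
  have h3 := h1.trans h2
  exact ⟨h3, by linarith⟩
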